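/- arXiv:2303.02923 — 3 statements merged into one kernel-verified Lean document; each statement's English description precedes it below -/
import Mathlib

section
/- Let T > 0 and α ∈ (0,1). Let f : [0,T] → ℝ be continuous on [0,T], continuously differentiable on (0,T], and with f′ ∈ L¹(0,T). Then for every t ∈ (0,T] the Caputo fractional derivative ∂ₜ^α f(t) := (1/Γ(1−α)) ∫₀ᵗ (t−s)^(−α) f′(s) ds satisfies ∂ₜ^α f(t) = (f(t) − f(0))/(t^α Γ(1−α)) + (α/Γ(1−α)) ∫₀ᵗ (f(t) − f(t−τ)) τ^(−α−1) dτ; in particular the last integral converges. -/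
open MeasureTheory Real Set

/-- Proposition 2.1 (first identity): for `f ∈ C¹((0,T]) ∩ C([0,T])` with `f' ∈ L¹(0,T)`,
the Caputo derivative `∂ₜ^α f(t) = (1/Γ(1-α)) ∫₀ᵗ (t-s)^(-α) f'(s) ds` equals
`(f(t)-f(0))/(t^α Γ(1-α)) + (α/Γ(1-α)) ∫₀ᵗ (f(t)-f(t-τ)) τ^(-α-1) dτ`,
and in particular the last integral converges. -/
theorem caputo_representation
    (T α : ℝ) (hT : 0 < T) (hα : α ∈ Ioo (0:ℝ) 1)
    (f f' : ℝ → ℝ)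
    (hf_cont : ContinuousOn f (Icc 0 T))
    (hf_deriv : ∀ s ∈ Ioc (0:ℝ) T, HasDerivAt f (f' s) s)
    (hf'_cont : ContinuousOn f' (Ioc 0 T))
    (hf'_int : IntervalIntegrable f' volume 0 T) :
    ∀ t ∈ Ioc (0:ℝ) T,
      IntervalIntegrable (fun τ => (f t - f (t - τ)) * τ ^ (-α - 1)) volume 0 t ∧
      (1 / Real.Gamma (1 - α)) * ∫ s in (0:ℝ)..t, (t - s) ^ (-α) * f' s
        = (f t - f 0) / (t ^ α * Real.Gamma (1 - α))
          + (α / Real.Gamma (1 - α)) * ∫ τ in (0:ℝ)..t, (f t - f (t - τ)) * τ ^ (-α - 1) := by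
  obtain ⟨hα0, hα1⟩ := hα
  rintro t ⟨ht0, htT⟩
  have hΓ : Real.Gamma (1 - α) ≠ 0 := (Real.Gamma_pos_of_pos (by linarith)).ne'
  have hh0 : 0 < t / 2 := by linarith
  have hht : t / 2 < t := by linarith
  obtain ⟨C, hC⟩ := (isCompact_Icc (a := t / 2) (b := t)).exists_bound_of_continuousOn
    (hf'_cont.mono (fun x hx => ⟨by linarith [hx.1], by linarith [hx.2]⟩))
  have hG : ∀ τ ∈ Icc (0:ℝ) (t / 2), ‖f t - f (t - τ)‖ ≤ C * τ := by
    intro τ hτ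
    have h := (convex_Icc (t / 2) t).norm_image_sub_le_of_norm_hasDerivWithin_le
      (f := f) (f' := f') (C := C) (x := t - τ) (y := t)
      (fun x hx => (hf_deriv x ⟨by linarith [hx.1], by linarith [hx.2]⟩).hasDerivWithinAt)
      hC ⟨by linarith [hτ.2], by linarith [hτ.1]⟩ ⟨by linarith, le_rfl⟩
    have e : ‖t - (t - τ)‖ = τ := by
      rw [sub_sub_cancel, Real.norm_of_nonneg hτ.1]
    rwa [e] at h
  have hGc : ContinuousOn (fun τ => f t - f (t - τ)) (Icc 0 t) := by
    refine continuousOn_const.sub (hf_cont.comp (by fun_prop) ?_)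
    intro x hx
    exact ⟨by linarith [hx.2], by linarith [hx.1]⟩
  have hpc : ∀ r : ℝ, ContinuousOn (fun τ : ℝ => τ ^ r) (Ioi 0) := fun r x hx =>
    (Real.continuousAt_rpow_const x r (Or.inl (ne_of_gt hx))).continuousWithinAt
  have hpi : IntervalIntegrable (fun τ : ℝ => τ ^ (-α)) volume 0 (t / 2) :=
    intervalIntegral.intervalIntegrable_rpow' (by linarith)
  have hI1 : IntervalIntegrable (fun τ => (f t - f (t - τ)) * τ ^ (-α - 1)) volume 0 t := by
    refine IntervalIntegrable.trans (b := t / 2) ?_ ?_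
    · refine (hpi.const_mul C).mono_fun' ?_ ?_
      · rw [uIoc_of_le hh0.le]
        refine ContinuousOn.aestronglyMeasurable ?_ measurableSet_Ioc
        exact (hGc.mono (fun x hx => ⟨hx.1.le, by linarith [hx.2]⟩)).mul
          ((hpc _).mono (fun x hx => hx.1))
      · rw [uIoc_of_le hh0.le]
        refine (ae_restrict_iff' measurableSet_Ioc).2 (Filter.Eventually.of_forall ?_)
        intro τ hτ
        have hp : 0 ≤ τ ^ (-α - 1) := Real.rpow_nonneg hτ.1.le _
        calc ‖(f t - f (t - τ)) * τ ^ (-α - 1)‖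
            = ‖f t - f (t - τ)‖ * τ ^ (-α - 1) := by
              rw [norm_mul, Real.norm_of_nonneg hp]
          _ ≤ C * τ * τ ^ (-α - 1) :=
              mul_le_mul_of_nonneg_right (hG τ ⟨hτ.1.le, hτ.2⟩) hp
          _ = C * τ ^ (-α) := by
              rw [Real.rpow_sub_one hτ.1.ne']
              field_simp [hτ.1.ne']
    · refine ContinuousOn.intervalIntegrable ?_
      rw [uIcc_of_le hht.le]
      exact (hGc.mono (fun x hx => ⟨by linarith [hx.1], hx.2⟩)).mul
          ((hpc _).mono (fun x hx => lt_of_lt_of_le hh0 hx.1))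
  have hf't : IntervalIntegrable (fun τ => f' (t - τ)) volume 0 t := by
    have h0 : IntervalIntegrable f' volume 0 t := hf'_int.mono_set (by
      rw [uIcc_of_le ht0.le, uIcc_of_le hT.le]; exact Icc_subset_Icc_right htT)
    have h1 := (h0.comp_sub_left t).symm
    simpa using h1
  have hI2 : IntervalIntegrable (fun τ => τ ^ (-α) * f' (t - τ)) volume 0 t := by
    refine IntervalIntegrable.trans (b := t / 2) ?_ ?_
    · refine hpi.mul_continuousOn ?_
      rw [uIcc_of_le hh0.le]
      refine hf'_cont.comp (by fun_prop) ?_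
      intro x hx
      exact ⟨by linarith [hx.2], by linarith [hx.1]⟩
    · refine IntervalIntegrable.continuousOn_mul (hf't.mono_set ?_) ?_
      · rw [uIcc_of_le ht0.le, uIcc_of_le hht.le]; exact Icc_subset_Icc_left hh0.le
      · rw [uIcc_of_le hht.le]
        exact (hpc _).mono (fun x hx => lt_of_lt_of_le hh0 hx.1)
  refine ⟨hI1, ?_⟩
  have key := intervalIntegral.integral_eq_sub_of_hasDerivAt_of_tendsto
    (f := fun τ => τ ^ (-α) * (f t - f (t - τ)))
    (f' := fun τ => τ ^ (-α) * f' (t - τ) - α * ((f t - f (t - τ)) * τ ^ (-α - 1)))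
    (a := 0) (b := t) (fa := 0) (fb := t ^ (-α) * (f t - f 0)) ht0 ?_
    (hI2.sub (hI1.const_mul α)) ?_ ?_
  · rw [intervalIntegral.integral_sub hI2 (hI1.const_mul α),
      intervalIntegral.integral_const_mul] at key
    have e : ∫ s in (0:ℝ)..t, (t - s) ^ (-α) * f' s
        = ∫ τ in (0:ℝ)..t, τ ^ (-α) * f' (t - τ) := by
      have := intervalIntegral.integral_comp_sub_left (a := 0) (b := t)
        (fun s => (t - s) ^ (-α) * f' s) t
      simpa using this.symm
    rw [e, eq_add_of_sub_eq key, Real.rpow_neg ht0.le]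
    have : t ^ α ≠ 0 := (Real.rpow_pos_of_pos ht0 α).ne'
    field_simp
    ring
  · intro x hx
    have h1 : HasDerivAt (fun τ : ℝ => τ ^ (-α)) (-α * x ^ (-α - 1)) x :=
      Real.hasDerivAt_rpow_const (Or.inl hx.1.ne')
    have h2 : HasDerivAt (fun τ : ℝ => f (t - τ)) (-f' (t - x)) x :=
      HasDerivAt.comp_const_sub t x (hf_deriv (t - x) ⟨by linarith [hx.2], by linarith [hx.1]⟩)
    have h3 := h1.mul (h2.const_sub (f t))
    refine h3.congr_deriv ?_
    ring
  · have hz : Filter.Tendsto (fun τ : ℝ => C * τ ^ (1 - α)) (nhdsWithin 0 (Ioi 0)) (nhds 0) := by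
      have : ContinuousAt (fun τ : ℝ => C * τ ^ (1 - α)) 0 :=
        continuousAt_const.mul (Real.continuousAt_rpow_const 0 _ (Or.inr (by linarith)))
      have h := this.tendsto
      simp only [Real.zero_rpow (by linarith : (1 - α) ≠ 0), mul_zero] at h
      exact h.mono_left nhdsWithin_le_nhds
    refine squeeze_zero_norm' ?_ hz
    filter_upwards [Ioo_mem_nhdsGT hh0] with τ hτ
    have hp : 0 ≤ τ ^ (-α) := Real.rpow_nonneg hτ.1.le _
    calc ‖τ ^ (-α) * (f t - f (t - τ))‖
        = τ ^ (-α) * ‖f t - f (t - τ)‖ := by rw [norm_mul, Real.norm_of_nonneg hp]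
      _ ≤ τ ^ (-α) * (C * τ) :=
          mul_le_mul_of_nonneg_left (hG τ ⟨hτ.1.le, hτ.2.le⟩) hp
      _ = C * τ ^ (1 - α) := by
          rw [show 1 - α = -α + 1 by ring, Real.rpow_add_one hτ.1.ne']
          ring
  · have hc : ContinuousOn (fun τ => τ ^ (-α) * (f t - f (t - τ))) (Ioc 0 t) :=
      ((hpc _).mono (fun x hx => hx.1)).mul (hGc.mono Ioc_subset_Icc_self)
    have h := (hc t ⟨ht0, le_rfl⟩).tendsto
    simp only [sub_self] at h
    refine h.mono_left ?_
    rw [← nhdsWithin_Ioo_eq_nhdsLT ht0]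
    exact nhdsWithin_mono _ Ioo_subset_Ioc_self
end

section
/- Let T > 0 and α ∈ (0,1). Let f : [0,T] → ℝ be continuous on [0,T], continuously differentiable on (0,T], and with f′ ∈ L¹(0,T). Define f̃ : (−∞,T] → ℝ by f̃(s) := f(s) for s ∈ (0,T] and f̃(s) := f(0) for s ≤ 0. Then for every t ∈ (0,T], the Caputo fractional derivative ∂ₜ^α f(t) := (1/Γ(1−α)) ∫₀ᵗ (t−s)^(−α) f′(s) ds equals (α/Γ(1−α)) ∫_{−∞}^t (f(t) − f̃(ξ)) |t−ξ|^(−α−1) dξ. -/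
open MeasureTheory Real Set

lemma aux_tail (t α : ℝ) (ht : 0 < t) (hα : α ∈ Ioo (0:ℝ) 1) :
    IntegrableOn (fun ξ => (t - ξ) ^ (-α - 1)) (Iic 0) ∧
      ∫ ξ in Iic (0:ℝ), (t - ξ) ^ (-α - 1) = t ^ (-α) / α := by
  obtain ⟨h0, h1⟩ := hα
  have mp : MeasurePreserving (fun x : ℝ => t - x) volume volume :=
    Measure.measurePreserving_sub_left volume t
  have me : MeasurableEmbedding (fun x : ℝ => t - x) :=
    (MeasurableEquiv.subLeft t).measurableEmbedding
  have hpre : (fun x : ℝ => t - x) ⁻¹' (Ici t) = Iic 0 := by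
    ext x; simp
  have hi := integrableOn_Ioi_rpow_of_lt (a := -α - 1) (by linarith) ht
  have hv := integral_Ioi_rpow_of_lt (a := -α - 1) (by linarith) ht
  constructor
  · have := (mp.integrableOn_comp_preimage me (f := fun x : ℝ => x ^ (-α - 1)) (s := Ici t)).2
      ((integrableOn_Ici_iff_integrableOn_Ioi (by simp)).2 hi)
    rw [hpre] at this
    exact this
  · have := mp.setIntegral_preimage_emb me (fun x : ℝ => x ^ (-α - 1)) (Ici t)
    rw [hpre, integral_Ici_eq_integral_Ioi, hv] at this
    rw [this]
    have e : -α - 1 + 1 = -α := by ring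
    rw [e, neg_div_neg_eq]

/-- Proposition 2.1 (second identity): for `f ∈ C¹((0,T]) ∩ C([0,T])` with `f' ∈ L¹(0,T)`,
the Caputo derivative `∂ₜ^α f(t)` equals `(α/Γ(1-α)) ∫_{-∞}^t (f(t) - f̃(ξ)) |t-ξ|^(-α-1) dξ`,
where `f̃` extends `f` by `f(0)` to `(-∞,0]`. -/
theorem caputo_representation_extended
    (T α : ℝ) (hT : 0 < T) (hα : α ∈ Ioo (0:ℝ) 1)
    (f f' : ℝ → ℝ)
    (hf_cont : ContinuousOn f (Icc 0 T))
    (hf_deriv : ∀ s ∈ Ioc (0:ℝ) T, HasDerivAt f (f' s) s)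
    (hf'_cont : ContinuousOn f' (Ioc 0 T))
    (hf'_int : IntervalIntegrable f' volume 0 T)
    (ftilde : ℝ → ℝ)
    (hftilde_pos : ∀ s ∈ Ioc (0:ℝ) T, ftilde s = f s)
    (hftilde_neg : ∀ s : ℝ, s ≤ 0 → ftilde s = f 0) :
    ∀ t ∈ Ioc (0:ℝ) T,
      (1 / Real.Gamma (1 - α)) * ∫ s in (0:ℝ)..t, (t - s) ^ (-α) * f' s
        = (α / Real.Gamma (1 - α)) * ∫ ξ in Iic t, (f t - ftilde ξ) * |t - ξ| ^ (-α - 1) := by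
  intro t ht
  obtain ⟨ht0, htT⟩ := ht
  obtain ⟨tailI, tailV⟩ := aux_tail t α ht0 hα
  obtain ⟨h0, h1⟩ := hα
  set D := dslope f t with hD
  have hDmul : ∀ x, f t - f x = (t - x) * D x := by
    intro x
    have := sub_smul_dslope f t x
    simp only [smul_eq_mul] at this
    linarith
  have hDc : ContinuousOn D (Icc 0 t) := by
    intro x hx
    by_cases hxt : x = t
    · subst hxt
      exact (continuousAt_dslope_same.2
        (hf_deriv _ ⟨ht0, htT⟩).differentiableAt).continuousWithinAt
    · exact (continuousWithinAt_dslope_of_ne hxt).2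
        ((hf_cont x ⟨hx.1, hx.2.trans htT⟩).mono (Icc_subset_Icc_right htT))
  have hpow : IntervalIntegrable (fun x : ℝ => (t - x) ^ (-α)) volume 0 t := by
    have := (intervalIntegral.intervalIntegrable_rpow' (a := t) (b := 0) (r := -α)
      (by linarith)).comp_sub_left t
    simpa using this
  have hBI : IntervalIntegrable (fun x => (f t - f x) * (t - x) ^ (-α - 1)) volume 0 t := by
    have h := hpow.mul_continuousOn (g := D) (by rwa [uIcc_of_le ht0.le])
    refine h.congr_uIoo ?_
    rw [uIoo_of_le ht0.le]
    intro x hx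
    have hx' : 0 < t - x := by linarith [hx.2]
    simp only
    rw [hDmul x, rpow_sub_one hx'.ne']
    field_simp
  have hAI : IntervalIntegrable (fun s => (t - s) ^ (-α) * f' s) volume 0 t := by
    have hh : 0 < t / 2 := by linarith
    refine IntervalIntegrable.trans (b := t / 2) ?_ ?_
    · refine IntervalIntegrable.continuousOn_mul (hf'_int.mono_set ?_) ?_
      · rw [uIcc_of_le hh.le, uIcc_of_le hT.le]
        exact Icc_subset_Icc_right (by linarith)
      · rw [uIcc_of_le hh.le]
        intro x hx
        refine ContinuousAt.continuousWithinAt ?_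
        exact ContinuousAt.rpow_const (by fun_prop) (Or.inl (by linarith [hx.2]))
    · refine IntervalIntegrable.mul_continuousOn (hpow.mono_set ?_) (hf'_cont.mono ?_)
      · rw [uIcc_of_le (by linarith), uIcc_of_le ht0.le]
        exact Icc_subset_Icc_left (by linarith)
      · rw [uIcc_of_le (by linarith)]
        intro x hx
        exact ⟨by linarith [hx.1], by linarith [hx.2]⟩
  have hgeq : ∀ x ∈ Icc 0 t, (f t - f x) * (t - x) ^ (-α) = D x * (t - x) ^ (1 - α) := by
    intro x hx
    rcases hx.2.eq_or_lt with h | h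
    · subst h
      simp [zero_rpow (show (1 - α) ≠ 0 by linarith)]
    · rw [hDmul x, show (1 - α) = -α + 1 by ring, rpow_add_one (by linarith)]
      ring
  have hgc : ContinuousOn (fun x => (f t - f x) * (t - x) ^ (-α)) (Icc 0 t) := by
    refine ContinuousOn.congr (f := fun x => D x * (t - x) ^ (1 - α)) ?_ hgeq
    refine hDc.mul ?_
    exact ContinuousOn.rpow_const (by fun_prop) (fun x _ => Or.inr (by linarith))
  have ftc := intervalIntegral.integral_eq_sub_of_hasDerivAt_of_le ht0.le hgc
    (f' := fun x => α * ((f t - f x) * (t - x) ^ (-α - 1)) - (t - x) ^ (-α) * f' x)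
    (by
      intro x hx
      have hx' : t - x ≠ 0 := by linarith [hx.2]
      have d1 := (hf_deriv x ⟨hx.1, by linarith [hx.2]⟩).const_sub (f t)
      have d2 := ((hasDerivAt_id x).const_sub t).rpow_const (p := -α) (Or.inl hx')
      refine (d1.mul d2).congr_deriv ?_
      simp only [id]
      ring)
    ((hBI.const_mul α).sub hAI)
  rw [intervalIntegral.integral_sub (hBI.const_mul α) hAI,
    intervalIntegral.integral_const_mul] at ftc
  simp only [sub_self, zero_mul, sub_zero, zero_sub] at ftc
  have e1 : EqOn (fun ξ => (f t - ftilde ξ) * |t - ξ| ^ (-α - 1))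
      (fun ξ => (f t - f 0) * (t - ξ) ^ (-α - 1)) (Iic 0) := by
    intro x hx
    have hx : x ≤ 0 := hx
    simp only
    rw [hftilde_neg x hx, abs_of_nonneg (by linarith)]
  have e2 : EqOn (fun ξ => (f t - ftilde ξ) * |t - ξ| ^ (-α - 1))
      (fun ξ => (f t - f ξ) * (t - ξ) ^ (-α - 1)) (Ioc 0 t) := by
    intro x hx
    simp only
    rw [hftilde_pos x ⟨hx.1, hx.2.trans htT⟩, abs_of_nonneg (by linarith [hx.2])]
  have hB' := (intervalIntegrable_iff_integrableOn_Ioc_of_le ht0.le).1 hBI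
  have key : ∫ ξ in Iic t, (f t - ftilde ξ) * |t - ξ| ^ (-α - 1)
      = (f t - f 0) * (t ^ (-α) / α)
        + ∫ x in (0:ℝ)..t, (f t - f x) * (t - x) ^ (-α - 1) := by
    rw [← Iic_union_Ioc_eq_Iic ht0.le, setIntegral_union (Iic_disjoint_Ioc le_rfl)
      measurableSet_Ioc, setIntegral_congr_fun measurableSet_Iic e1,
      setIntegral_congr_fun measurableSet_Ioc e2, integral_const_mul, tailV,
      intervalIntegral.integral_of_le ht0.le]
    · exact IntegrableOn.congr_fun (Integrable.const_mul tailI _) e1.symm measurableSet_Iic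
    · exact hB'.congr_fun e2.symm measurableSet_Ioc
  rw [key]
  have hA : ∫ s in (0:ℝ)..t, (t - s) ^ (-α) * f' s
      = α * ((f t - f 0) * (t ^ (-α) / α)
        + ∫ x in (0:ℝ)..t, (f t - f x) * (t - x) ^ (-α - 1)) := by
    have : α * ((f t - f 0) * (t ^ (-α) / α)) = (f t - f 0) * t ^ (-α) := by
      field_simp
    rw [mul_add, this]
    linarith
  rw [hA]
  ring
end

section
/- Let T > 0 and α ∈ (0,1). Let f : [0,T] → ℝ be continuous on [0,T] and continuously differentiable on (0,T]. Then for every t ∈ (0,T] the integral K_(0,t)[f](t) := (α/Γ(1−α)) ∫₀ᵗ (f(t) − f(t−τ)) τ^(−α−1) dτ converges (the integrand is integrable on (0,t)), and the map t ↦ K_(0,t)[f](t) is continuous on (0,T]. -/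
open MeasureTheory Real Set

lemma key_bound
    (T : ℝ) (f f' : ℝ → ℝ)
    (hf_cont : ContinuousOn f (Icc 0 T))
    (hf_deriv : ∀ s ∈ Ioc (0:ℝ) T, HasDerivAt f (f' s) s)
    (hf'_cont : ContinuousOn f' (Ioc 0 T)) (t0 : ℝ) (ht0 : t0 ∈ Ioc (0:ℝ) T) :
    ∃ C : ℝ, 0 ≤ C ∧ ∀ t ∈ Ioc (3/4*t0) T, ∀ τ ∈ Ioc 0 t, |f t - f (t - τ)| ≤ C * τ := by
  obtain ⟨h0, h1⟩ := ht0
  obtain ⟨M, hM⟩ := isCompact_Icc.exists_bound_of_continuousOn hf_cont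
  have hsub : Icc (t0/2) T ⊆ Ioc 0 T := fun x hx => ⟨by linarith [hx.1], hx.2⟩
  obtain ⟨L, hL⟩ := (isCompact_Icc (a := t0/2) (b := T)).exists_bound_of_continuousOn
    (hf'_cont.mono hsub)
  have hM0 : 0 ≤ M := (norm_nonneg _).trans (hM 0 ⟨le_rfl, by linarith⟩)
  have hL0 : 0 ≤ L := (norm_nonneg _).trans (hL T ⟨by linarith, le_rfl⟩)
  refine ⟨L + 2 * M / (t0/4), by positivity, ?_⟩
  intro t ht τ hτ
  have hq : 0 ≤ 2 * M / (t0/4) := by positivity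
  have hτ0 := hτ.1
  rw [add_mul]
  by_cases h : τ ≤ t0/4
  · have := (convex_Icc (t0/2) T).norm_image_sub_le_of_norm_hasDerivWithin_le
      (f := f) (f' := f') (C := L)
      (fun x hx => (hf_deriv x (hsub hx)).hasDerivWithinAt) hL
      (x := t - τ) (y := t) ⟨by linarith [ht.1], by linarith [ht.2]⟩
      ⟨by linarith [ht.1], ht.2⟩
    rw [Real.norm_eq_abs, Real.norm_eq_abs, sub_sub_cancel, abs_of_pos hτ0] at this
    have : 0 ≤ 2 * M / (t0/4) * τ := by positivity
    linarith
  · push Not at h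
    have a1 := hM t ⟨by linarith [ht.1], ht.2⟩
    have a2 := hM (t - τ) ⟨by linarith [hτ.2], by linarith [ht.2]⟩
    have a3 : |f t - f (t - τ)| ≤ 2 * M := by
      have := norm_sub_le (f t) (f (t - τ))
      rw [Real.norm_eq_abs] at this
      linarith
    have a4 : 2 * M ≤ 2 * M / (t0/4) * τ := by
      calc 2 * M = 2 * M / (t0/4) * (t0/4) := by field_simp
        _ ≤ _ := by gcongr
    have : 0 ≤ L * τ := by positivity
    linarith

/-- Proposition 2.2: for `f ∈ C¹((0,T]) ∩ C([0,T])` and `t ∈ (0,T]`, the integral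
`K_(0,t)[f](t) = (α/Γ(1-α)) ∫₀ᵗ (f(t) - f(t-τ)) τ^(-α-1) dτ` exists, and
`t ↦ K_(0,t)[f](t)` is continuous on `(0,T]`. -/
theorem K_exists_and_continuous
    (T α : ℝ) (hT : 0 < T) (hα : α ∈ Ioo (0:ℝ) 1)
    (f f' : ℝ → ℝ)
    (hf_cont : ContinuousOn f (Icc 0 T))
    (hf_deriv : ∀ s ∈ Ioc (0:ℝ) T, HasDerivAt f (f' s) s)
    (hf'_cont : ContinuousOn f' (Ioc 0 T)) :
    (∀ t ∈ Ioc (0:ℝ) T,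
      IntervalIntegrable (fun τ => (f t - f (t - τ)) * τ ^ (-α - 1)) volume 0 t) ∧
    ContinuousOn
      (fun t => (α / Real.Gamma (1 - α)) * ∫ τ in (0:ℝ)..t, (f t - f (t - τ)) * τ ^ (-α - 1))
      (Ioc 0 T) := by
  obtain ⟨hα0, hα1⟩ := hα
  have hpow : ∀ τ : ℝ, 0 < τ → τ * τ ^ (-α - 1) = τ ^ (-α) := by
    intro τ h
    rw [Real.rpow_sub_one h.ne']
    field_simp
  have hcont : ∀ t ∈ Ioc (0:ℝ) T,
      ContinuousOn (fun τ => (f t - f (t - τ)) * τ ^ (-α - 1)) (Ioc 0 t) := by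
    intro t ht
    refine (continuousOn_const.sub (hf_cont.comp (by fun_prop) ?_)).mul ?_
    · intro τ hτ
      exact ⟨by linarith [hτ.2], by linarith [hτ.1, ht.2]⟩
    · exact continuousOn_id.rpow_const (fun x hx => Or.inl hx.1.ne')
  constructor
  · intro t ht
    obtain ⟨C, hC0, hC⟩ := key_bound T f f' hf_cont hf_deriv hf'_cont t ht
    have hb : IntervalIntegrable (fun τ : ℝ => C * τ ^ (-α)) volume 0 t :=
      (intervalIntegral.intervalIntegrable_rpow' (by linarith)).const_mul C
    refine hb.mono_fun ?_ ?_
    · rw [uIoc_of_le ht.1.le]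
      exact (hcont t ht).aestronglyMeasurable measurableSet_Ioc
    · rw [uIoc_of_le ht.1.le]
      filter_upwards [ae_restrict_mem measurableSet_Ioc] with τ hτ
      have h1 := hC t ⟨by linarith [ht.1], ht.2⟩ τ hτ
      have h2 : 0 ≤ τ ^ (-α - 1) := Real.rpow_nonneg hτ.1.le _
      have h3 : 0 ≤ τ ^ (-α) := Real.rpow_nonneg hτ.1.le _
      rw [norm_mul, Real.norm_eq_abs, Real.norm_of_nonneg h2,
        Real.norm_of_nonneg (mul_nonneg hC0 h3), ← hpow τ hτ.1, ← mul_assoc]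
      gcongr
  · refine continuousOn_const.mul ?_
    have heq : ∀ t : ℝ, (∫ τ in (0:ℝ)..t, (f t - f (t - τ)) * τ ^ (-α - 1)) =
        t * ∫ u in (0:ℝ)..1, (f t - f (t - t * u)) * (t * u) ^ (-α - 1) := by
      intro t
      have := intervalIntegral.mul_integral_comp_mul_left (a := 0) (b := 1)
        (f := fun τ => (f t - f (t - τ)) * τ ^ (-α - 1)) t
      simpa using this.symm
    simp_rw [heq]
    refine continuousOn_id.mul ?_
    intro t0 ht0
    obtain ⟨C, hC0, hC⟩ := key_bound T f f' hf_cont hf_deriv hf'_cont t0 ht0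
    have hmem : ∀ᶠ t in nhdsWithin t0 (Ioc 0 T), t ∈ Ioc (3/4*t0) T := by
      filter_upwards [self_mem_nhdsWithin, mem_nhdsWithin_of_mem_nhds
        (Ioi_mem_nhds (show 3/4*t0 < t0 by linarith [ht0.1]))] with t h1 h2
      exact ⟨h2, h1.2⟩
    have ha : 0 < 3/4*t0 := by linarith [ht0.1]
    refine intervalIntegral.continuousWithinAt_of_dominated_interval
      (bound := fun u => C * ((3/4*t0) ^ (-α) * u ^ (-α))) ?_ ?_ ?_ ?_
    · filter_upwards [hmem] with t ht
      have ht' : 0 < t := ha.trans ht.1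
      rw [uIoc_of_le zero_le_one]
      refine ContinuousOn.aestronglyMeasurable ?_ measurableSet_Ioc
      refine (hcont t ⟨ht', ht.2⟩).comp (f := fun u => t * u) (by fun_prop) ?_
      intro u hu
      exact ⟨mul_pos ht' hu.1, by nlinarith [hu.2]⟩
    · filter_upwards [hmem] with t ht
      have ht' : 0 < t := ha.trans ht.1
      refine Filter.Eventually.of_forall ?_
      intro u hu
      rw [uIoc_of_le zero_le_one] at hu
      have hp : 0 < t * u := mul_pos ht' hu.1
      have h1 := hC t ht (t * u) ⟨hp, by nlinarith [hu.2]⟩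
      have h2 : 0 ≤ (t * u) ^ (-α - 1) := Real.rpow_nonneg hp.le _
      rw [norm_mul, Real.norm_eq_abs, Real.norm_of_nonneg h2]
      calc _ ≤ C * (t * u) * (t * u) ^ (-α - 1) := by gcongr
        _ = C * (t * u) ^ (-α) := by rw [mul_assoc, hpow _ hp]
        _ = C * (t ^ (-α) * u ^ (-α)) := by rw [Real.mul_rpow ht'.le hu.1.le]
        _ ≤ _ := by
          have h3 : 0 ≤ u ^ (-α) := Real.rpow_nonneg hu.1.le _
          have h4 := Real.rpow_le_rpow_of_nonpos ha ht.1.le (show -α ≤ 0 by linarith)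
          gcongr
    · exact ((intervalIntegral.intervalIntegrable_rpow' (by linarith)).const_mul _).const_mul C
    · refine Filter.Eventually.of_forall ?_
      intro u hu
      rw [uIoc_of_le zero_le_one] at hu
      have hc : ContinuousOn (fun t => (f t - f (t - t * u)) * (t * u) ^ (-α - 1))
          (Ioc 0 T) := by
        refine ((hf_cont.mono Ioc_subset_Icc_self).sub
          (hf_cont.comp (by fun_prop) ?_)).mul ?_
        · intro t ht
          exact ⟨by nlinarith [hu.2, ht.1], by nlinarith [hu.1, ht.1, ht.2]⟩
        · exact ContinuousOn.rpow_const (by fun_prop)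
            (fun x hx => Or.inl (mul_pos hx.1 hu.1).ne')
      exact hc t0 ht0
end
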